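/- Let a, b, z be complex numbers with Re(a) > 0, Re(b − a) > 0, and Re(b + 1/2) > 0. Then Kummer's confluent hypergeometric function satisfies the summation formula M(2a; 2b; z) = Σ_{n=0}^∞ ((a)_n (b)_n (b−a)_n / ((b)_{2n} (2b)_{2n} · n!)) · (−z²)^n · M(a+n; b+2n; z). -/

import Mathlib

/-- Pochhammer symbol `(x)_n = x (x+1) ⋯ (x+n-1)`. -/
noncomputable def poch (x : ℂ) (n : ℕ) : ℂ := ∏ k ∈ Finset.range n, (x + k)

/-- Kummer's confluent hypergeometric function `M(a; b; z)`. -/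
noncomputable def kummerM (a b z : ℂ) : ℂ :=
  ∑' n : ℕ, poch a n / (poch b n * n.factorial) * z ^ n

lemma poch_zero (x : ℂ) : poch x 0 = 1 := by simp [poch]

lemma poch_succ (x : ℂ) (n : ℕ) : poch x (n + 1) = poch x n * (x + n) := by
  simp [poch, Finset.prod_range_succ]

lemma poch_add (x : ℂ) (m n : ℕ) : poch x (m + n) = poch x m * poch (x + m) n := by
  induction n with
  | zero => simp [poch_zero]
  | succ k ih => rw [← add_assoc, poch_succ, ih, poch_succ]; push_cast; ring

lemma add_nat_ne {x : ℂ} (hx : 0 < x.re) (k : ℕ) : x + k ≠ 0 := by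
  intro h
  have := congrArg Complex.re h
  simp at this
  have : (0 : ℝ) ≤ k := Nat.cast_nonneg k
  linarith

lemma poch_ne {x : ℂ} (hx : 0 < x.re) (n : ℕ) : poch x n ≠ 0 :=
  Finset.prod_ne_zero_iff.mpr fun k _ => add_nat_ne hx k

lemma poch_two (b : ℂ) (n : ℕ) :
    poch (2 * b) (2 * n) = 4 ^ n * poch b n * poch (b + 1 / 2) n := by
  induction n with
  | zero => simp [poch_zero]
  | succ k ih =>
    rw [show 2 * (k + 1) = 2 * k + 1 + 1 by ring, poch_succ, poch_succ, ih, poch_succ, poch_succ]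
    push_cast; ring

noncomputable def tt (a b : ℂ) (N n : ℕ) : ℂ :=
  (-1) ^ n * poch (b - a) n * poch a (N - n) * (N.descFactorial (2 * n) : ℂ) /
    (4 ^ n * poch (b + 1 / 2) n * n.factorial)

lemma descF_big {N n : ℕ} (h : N < n) : N.descFactorial n = 0 :=
  Nat.descFactorial_eq_zero_iff_lt.mpr h

lemma tt_big (a b : ℂ) {N n : ℕ} (h : N < 2 * n) : tt a b N n = 0 := by
  simp [tt, descF_big h]

lemma tt_zero (a b : ℂ) (N : ℕ) : tt a b N 0 = poch a N := by
  simp [tt, poch_zero]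

lemma tt_rec (a b : ℂ) (hb : 0 < (b + 1 / 2).re) (N m : ℕ) :
    (2 * b + N) * tt a b (N + 1) (m + 1) - (2 * a + N) * (b + N) * tt a b N (m + 1)
      = tt a b N (m + 1) * (b - a + (m + 1 : ℕ)) * (N - 2 * (m + 1 : ℕ))
        - tt a b N m * (b - a + m) * (N - 2 * m) := by
  rcases lt_trichotomy N (2 * m) with h | h | h
  · rw [tt_big a b h, tt_big a b (show N < 2 * (m + 1) by omega),
      tt_big a b (show N + 1 < 2 * (m + 1) by omega)]
    ring
  · rw [tt_big a b (show N < 2 * (m + 1) by omega),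
      tt_big a b (show N + 1 < 2 * (m + 1) by omega), h]
    push_cast; ring
  · obtain ⟨r, rfl⟩ : ∃ r, N = 2 * m + 1 + r := ⟨N - (2 * m + 1), by omega⟩
    have e1 : 2 * m + 1 + r + 1 - (m + 1) = (m + r) + 1 := by omega
    have e2 : 2 * m + 1 + r - (m + 1) = m + r := by omega
    have e3 : 2 * m + 1 + r - m = (m + r) + 1 := by omega
    have d1 : (2 * m + 1 + r + 1).descFactorial (2 * (m + 1))
        = (2 * m + r + 2) * ((r + 1) * (2 * m + 1 + r).descFactorial (2 * m)) := by
      rw [show 2 * (m + 1) = (2 * m + 1) + 1 by ring, Nat.succ_descFactorial_succ,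
        Nat.descFactorial_succ, show 2 * m + 1 + r - 2 * m = r + 1 by omega]
      ring
    have d2 : (2 * m + 1 + r).descFactorial (2 * (m + 1))
        = r * ((r + 1) * (2 * m + 1 + r).descFactorial (2 * m)) := by
      rw [show 2 * (m + 1) = (2 * m + 1) + 1 by ring, Nat.descFactorial_succ,
        Nat.descFactorial_succ, show 2 * m + 1 + r - 2 * m = r + 1 by omega,
        show 2 * m + 1 + r - (2 * m + 1) = r by omega]
    unfold tt
    rw [e1, e2, e3, d1, d2, poch_succ, poch_succ, poch_succ, Nat.factorial_succ]
    have h1 := poch_ne hb m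
    have h2 := add_nat_ne hb m
    have h3 : (m.factorial : ℂ) ≠ 0 := by exact_mod_cast m.factorial_ne_zero
    have h4 : (m : ℂ) + 1 ≠ 0 := by exact_mod_cast m.succ_ne_zero
    generalize poch (b + 1 / 2) m = P at *
    generalize hQ : b + 1 / 2 + (m : ℂ) = Q at *
    have hb' : b = Q - 1 / 2 - m := by rw [← hQ]; ring
    generalize poch (b - a) m = R at *
    subst hb'
    push_cast
    rw [pow_succ, pow_succ]
    field_simp
    ring

lemma tt_tele (a b : ℂ) (hb : 0 < (b + 1 / 2).re) (N K : ℕ) :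
    ∑ n ∈ Finset.range (K + 1),
      ((2 * b + N) * tt a b (N + 1) n - (2 * a + N) * (b + N) * tt a b N n)
      = tt a b N K * (b - a + K) * (N - 2 * K) := by
  induction K with
  | zero => simp [tt_zero, poch_succ]; ring
  | succ K ih => rw [Finset.sum_range_succ, ih, tt_rec a b hb]; ring

lemma tt_sum (a b : ℂ) (hb : 0 < (b + 1 / 2).re) (N : ℕ) :
    (∑ n ∈ Finset.range (N + 1), tt a b N n) * poch (2 * b) N = poch (2 * a) N * poch b N := by
  induction N with
  | zero => simp [tt_zero, poch_zero]
  | succ N ih =>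
    have h := tt_tele a b hb N (N + 1)
    rw [tt_big a b (show N < 2 * (N + 1) by omega), Finset.sum_sub_distrib, ← Finset.mul_sum,
      ← Finset.mul_sum, Finset.sum_range_succ (fun n => tt a b N n),
      tt_big a b (show N < 2 * (N + 1) by omega)] at h
    rw [poch_succ, poch_succ, poch_succ]
    linear_combination poch (2 * b) N * h + (2 * a + N) * (b + N) * ih

lemma poch_le {c d : ℂ} {C : ℝ} (hC : 0 ≤ C) (h : ∀ k : ℕ, ‖c + k‖ ≤ C * ‖d + k‖) (n : ℕ) :
    ‖poch c n‖ ≤ C ^ n * ‖poch d n‖ := by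
  induction n with
  | zero => simp [poch_zero]
  | succ n ih =>
    rw [poch_succ, poch_succ, norm_mul, norm_mul]
    calc _ ≤ (C ^ n * ‖poch d n‖) * (C * ‖d + n‖) := by gcongr; exact h n
      _ = _ := by ring

lemma re_le_norm {d : ℂ} (k : ℕ) : d.re ≤ ‖d + k‖ := by
  have h := Complex.re_le_norm (d + k)
  simp at h
  have : (0 : ℝ) ≤ k := Nat.cast_nonneg k
  linarith

lemma ratio_bound (c d : ℂ) (hd : 0 < d.re) :
    ∃ C : ℝ, 0 ≤ C ∧ ∀ k : ℕ, ‖c + k‖ ≤ C * ‖d + k‖ := by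
  refine ⟨‖c - d‖ / d.re + 1, by positivity, fun k => ?_⟩
  have h1 : ‖c + k‖ ≤ ‖c - d‖ + ‖d + k‖ := by
    have := norm_add_le (c - d) (d + k)
    rwa [show c - d + (d + k) = c + k by ring] at this
  have h2 : ‖c - d‖ = ‖c - d‖ / d.re * d.re := by field_simp
  have h3 : ‖c - d‖ / d.re * d.re ≤ ‖c - d‖ / d.re * ‖d + k‖ := by
    gcongr; exact re_le_norm k
  linarith

lemma tail_bound (d : ℂ) (hd : 0 < d.re) (m n : ℕ) :
    ‖poch d m‖ ≤ (1 / d.re) ^ n * ‖poch d (m + n)‖ := by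
  induction n with
  | zero => simp
  | succ n ih =>
    rw [← add_assoc, poch_succ, norm_mul]
    have h : 1 ≤ 1 / d.re * ‖d + (m + n : ℕ)‖ := by
      rw [one_div, inv_mul_eq_div, le_div_iff₀ hd, one_mul]; exact re_le_norm _
    calc _ ≤ (1 / d.re) ^ n * ‖poch d (m + n)‖ * 1 := by simpa using ih
      _ ≤ (1 / d.re) ^ n * ‖poch d (m + n)‖ * (1 / d.re * ‖d + (m + n : ℕ)‖) := by gcongr
      _ = _ := by ring

noncomputable def FF (a b z : ℂ) (n N : ℕ) : ℂ :=
  tt a b N n * z ^ N / (N.factorial * poch b N)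

lemma FF_eq (a b z : ℂ) (n k : ℕ) :
    FF a b z n (2 * n + k) = (-1) ^ n * poch (b - a) n * poch a (n + k) /
      (4 ^ n * poch (b + 1 / 2) n * n.factorial * k.factorial * poch b (2 * n + k))
      * z ^ (2 * n + k) := by
  unfold FF tt
  have h : ((2 * n + k).factorial : ℂ)
      = k.factorial * ((2 * n + k).descFactorial (2 * n) : ℂ) := by
    have := Nat.factorial_mul_descFactorial (show 2 * n ≤ 2 * n + k by omega)
    rw [show 2 * n + k - 2 * n = k by omega] at this
    exact_mod_cast this.symm
  have h0 : ((2 * n + k).descFactorial (2 * n) : ℂ) ≠ 0 := by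
    have : (2 * n + k).descFactorial (2 * n) ≠ 0 := by
      rw [Ne, Nat.descFactorial_eq_zero_iff_lt]; omega
    exact_mod_cast this
  rw [h, show 2 * n + k - n = n + k by omega]
  generalize ((2 * n + k).descFactorial (2 * n) : ℂ) = D at *
  simp only [div_eq_mul_inv, mul_inv]
  have : D * D⁻¹ = 1 := mul_inv_cancel₀ h0
  linear_combination ((-1) ^ n * poch (b - a) n * poch a (n + k) * (4 ^ n)⁻¹ *
    (poch (b + 1 * 2⁻¹) n)⁻¹ * (n.factorial : ℂ)⁻¹ * z ^ (2 * n + k) * (k.factorial : ℂ)⁻¹ *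
    (poch b (2 * n + k))⁻¹) * this

lemma FF_summable (a b z : ℂ) (hb0 : 0 < b.re) (hb : 0 < (b + 1 / 2).re) :
    Summable (fun p : ℕ × ℕ => FF a b z p.1 p.2) := by
  let e : ℕ × ℕ → ℕ × ℕ := fun p => (p.1, 2 * p.1 + p.2)
  have he : Function.Injective e := by
    rintro ⟨a, b⟩ ⟨c, d⟩ h
    simp only [e, Prod.mk.injEq] at h ⊢
    omega
  rw [← he.summable_iff]
  · obtain ⟨C, hC, h1⟩ := ratio_bound (b - a) (b + 1 / 2) hb
    obtain ⟨D, hD, h2⟩ := ratio_bound a b hb0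
    set E := 1 / b.re with hE
    have hE0 : 0 ≤ E := by positivity
    have hs := (Real.summable_pow_div_factorial (C * D * E * ‖z‖ ^ 2)).mul_of_nonneg
      (Real.summable_pow_div_factorial (D * ‖z‖)) (fun n => by positivity) (fun n => by positivity)
    refine Summable.of_norm_bounded hs ?_
    rintro ⟨n, k⟩
    simp only [Function.comp, e]
    rw [FF_eq]
    have g1 := poch_le hC h1 n
    have g2 := poch_le hD h2 (n + k)
    have g3 := tail_bound b hb0 (n + k) n
    rw [show n + k + n = 2 * n + k by ring, ← hE] at g3
    have p1 := norm_pos_iff.mpr (poch_ne hb n)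
    have p2 := norm_pos_iff.mpr (poch_ne hb0 (2 * n + k))
    simp only [norm_mul, norm_div, norm_pow, norm_neg, norm_one, one_pow, one_mul,
      RCLike.norm_natCast, RCLike.norm_ofNat]
    have g4 : ‖poch a (n + k)‖ ≤ D ^ (n + k) * (E ^ n * ‖poch b (2 * n + k)‖) :=
      g2.trans (by gcongr)
    calc _ ≤ (C ^ n * ‖poch (b + 1 / 2) n‖) * (D ^ (n + k) * (E ^ n * ‖poch b (2 * n + k)‖)) /
          (1 * ‖poch (b + 1 / 2) n‖ * n.factorial * k.factorial * ‖poch b (2 * n + k)‖)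
          * ‖z‖ ^ (2 * n + k) := by
            gcongr
            exact one_le_pow₀ (by norm_num)
      _ = _ := by
        have : (0 : ℝ) < n.factorial := by exact_mod_cast n.factorial_pos
        have : (0 : ℝ) < k.factorial := by exact_mod_cast k.factorial_pos
        generalize ‖poch (b + 1 / 2) n‖ = P at *
        generalize ‖poch b (2 * n + k)‖ = Q at *
        field_simp
        ring
  · rintro ⟨n, N⟩ h
    have : N < 2 * n := by
      by_contra hh
      exact h ⟨(n, N - 2 * n), Prod.ext rfl (show 2 * n + (N - 2 * n) = N by omega)⟩
    simp [FF, tt_big a b this]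

/-- Summation formula for Kummer's confluent hypergeometric function, under positivity
assumptions on the real parts of the parameters. -/
theorem kummerM_sum_formula (a b z : ℂ) (ha : 0 < a.re) (hba : 0 < (b - a).re)
    (hb : 0 < (b + 1 / 2).re) :
    kummerM (2 * a) (2 * b) z =
      ∑' n : ℕ, poch a n * poch b n * poch (b - a) n /
          (poch b (2 * n) * poch (2 * b) (2 * n) * n.factorial) * (-z ^ 2) ^ n *
        kummerM (a + n) (b + 2 * n) z := by
  have hb0 : 0 < b.re := by
    simp at hba
    linarith
  have h2b : 0 < (2 * b).re := by simpa using hb0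
  have hS := FF_summable a b z hb0 hb
  have hL : ∀ N, poch (2 * a) N / (poch (2 * b) N * N.factorial) * z ^ N
      = ∑' n, FF a b z n N := by
    intro N
    rw [tsum_eq_sum (s := Finset.range (N + 1))]
    · have h := tt_sum a b hb N
      have h1 := poch_ne h2b N
      have h2 := poch_ne hb0 N
      have h3 : (N.factorial : ℂ) ≠ 0 := by exact_mod_cast N.factorial_ne_zero
      simp only [FF]
      rw [← Finset.sum_div, ← Finset.sum_mul]
      field_simp
      linear_combination -z ^ N * h
    · intro n hn
      rw [Finset.mem_range] at hn
      simp [FF, tt_big a b (show N < 2 * n by omega)]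
  have hR : ∀ n : ℕ, poch a n * poch b n * poch (b - a) n /
          (poch b (2 * n) * poch (2 * b) (2 * n) * n.factorial) * (-z ^ 2) ^ n *
        kummerM (a + n) (b + 2 * n) z = ∑' N, FF a b z n N := by
    intro n
    have hs : Summable (fun N => FF a b z n N) := hS.prod_factor n
    rw [← hs.sum_add_tsum_nat_add (2 * n), Finset.sum_eq_zero, zero_add, kummerM, ← tsum_mul_left]
    · refine tsum_congr fun k => ?_
      rw [add_comm k, FF_eq, poch_two, poch_add a n k, poch_add b (2 * n) k, neg_pow (z ^ 2),
        ← pow_mul, pow_add]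
      have h1 := poch_ne hb0 n
      push_cast
      simp only [div_eq_mul_inv, mul_inv]
      have : poch b n * (poch b n)⁻¹ = 1 := mul_inv_cancel₀ h1
      generalize (poch b n)⁻¹ = W at *
      linear_combination ((-1) ^ n * poch (b - a) n * poch a n * poch (a + n) k * (4 ^ n)⁻¹ *
        (poch (b + 1 * 2⁻¹) n)⁻¹ * (n.factorial : ℂ)⁻¹ * (k.factorial : ℂ)⁻¹ *
        (poch b (2 * n))⁻¹ * (poch (b + 2 * n) k)⁻¹ * z ^ (2 * n) * z ^ k) * this
    · intro N hN
      simp [FF, tt_big a b (Finset.mem_range.mp hN)]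
  rw [kummerM, tsum_congr hL, tsum_congr hR]
  exact (Summable.tsum_comm (f := fun n N => FF a b z n N) hS).symm ▸ rfl
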